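/- Let M, K ∈ ℂ^{n×n} be Hermitian positive definite and let X ∈ ℂ^{n×n} satisfy X*MX = I_n and X*KX = diag(ω₁², …, ωₙ²) where ω₁, …, ωₙ are pairwise distinct positive real numbers (so that all eigenvalues ±iω_j of P₀(λ) := λ²M + K are simple). Let u ∈ ℂ^n have all coordinates nonzero and set v := MXu. Then for every t > 0, every eigenvalue z of Pₜ(λ) := λ²M + λ·t·vv* + K satisfies Re z < 0. -/

import Mathlib

open Matrix ComplexOrder

/-!
Congruence with `X` turns `z² M + z D + K` into `z² + z E + diag Λ`, where `E = X* D X` is the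
damping `D` in modal coordinates. For `y ≠ 0` in its kernel, pairing with `y*` gives a scalar
quadratic with coefficients `y* y > 0`, `y* E y ≥ 0` and `y* Λ y > 0`. If the middle one is
positive, the roots lie in the open left half-plane. If it vanishes, then `E y = 0`, so `y` is an
eigenvector of `diag Λ`, hence a multiple of a basis vector, contradicting that every mode is
damped.
-/

theorem re_neg_of_quadratic_eq_zero {a b c z : ℂ} (ha : 0 ≤ a) (hb : 0 < b) (hc : 0 < c)
    (hz : z ^ 2 * a + z * b + c = 0) : z.re < 0 := by
  obtain ⟨a, ha, rfl⟩ := RCLike.nonneg_iff_exists_ofReal.mp ha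
  obtain ⟨b, hb, rfl⟩ := RCLike.pos_iff_exists_ofReal.mp hb
  obtain ⟨c, hc, rfl⟩ := RCLike.pos_iff_exists_ofReal.mp hc
  have hre : (z.re ^ 2 - z.im ^ 2) * a + z.re * b + c = 0 := by
    simpa [pow_two] using congrArg Complex.re hz
  have him : z.im * (2 * z.re * a + b) = 0 := by
    have : (z.re * z.im + z.im * z.re) * a + z.im * b = 0 := by
      simpa [pow_two] using congrArg Complex.im hz
    linear_combination this
  by_contra! hnonneg
  have hreal : z.im = 0 := (mul_eq_zero.mp him).resolve_right (by positivity)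
  rw [hreal, zero_pow two_ne_zero, sub_zero] at hre
  have : 0 < z.re ^ 2 * a + z.re * b + c := by positivity
  exact this.ne' hre

theorem injective_ofReal_sq {ι : Type*} {ω : ι → ℝ} (hω : ∀ i, 0 ≤ ω i)
    (hωinj : Function.Injective ω) : Function.Injective fun i => (ω i : ℂ) ^ 2 :=
  fun i j (hij : (ω i : ℂ) ^ 2 = (ω j : ℂ) ^ 2) =>
    hωinj <| (sq_eq_sq₀ (hω i) (hω j)).mp <| by exact_mod_cast hij

section Fintype

variable {ι : Type*} [Fintype ι] [DecidableEq ι]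

theorem re_neg_of_det_quadratic_eq_zero {M D K : Matrix ι ι ℂ} (hM : M.PosSemidef)
    (hD : D.PosSemidef) (hK : K.PosDef)
    (hker : ∀ (y : ι → ℂ) (μ : ℂ), y ≠ 0 → K *ᵥ y = μ • M *ᵥ y → D *ᵥ y ≠ 0)
    {z : ℂ} (hz : (z ^ 2 • M + z • D + K).det = 0) : z.re < 0 := by
  obtain ⟨y, hy, hPy⟩ := exists_mulVec_eq_zero_iff.mpr hz
  simp only [add_mulVec, smul_mulVec] at hPy
  have hDy : D *ᵥ y ≠ 0 := fun hDy => by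
    refine hker y (-z ^ 2) hy ?_ hDy
    rw [hDy, smul_zero, add_zero, add_comm] at hPy
    rw [neg_smul]
    exact eq_neg_of_add_eq_zero_left hPy
  have hDpos : 0 < star y ⬝ᵥ D *ᵥ y :=
    (hD.dotProduct_mulVec_nonneg y).lt_of_ne' (mt (hD.dotProduct_mulVec_zero_iff y).mp hDy)
  refine re_neg_of_quadratic_eq_zero (hM.dotProduct_mulVec_nonneg y) hDpos
    (hK.dotProduct_mulVec_pos hy) ?_
  simpa only [dotProduct_add, dotProduct_smul, smul_eq_mul, dotProduct_zero] using
    congrArg (star y ⬝ᵥ ·) hPy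

theorem exists_eq_single_of_diagonal_mulVec_eq_smul {R : Type*} [CommRing R] [IsDomain R]
    {d : ι → R} (hd : Function.Injective d) {y : ι → R} (hy : y ≠ 0) {μ : R}
    (h : diagonal d *ᵥ y = μ • y) : ∃ i, ∃ c ≠ 0, y = Pi.single i c := by
  have eigenvalue_eq {i : ι} (hi : y i ≠ 0) : d i = μ :=
    mul_right_cancel₀ hi <| by
      simpa only [mulVec_diagonal, Pi.smul_apply, smul_eq_mul] using congrFun h i
  obtain ⟨i, hi⟩ := Function.ne_iff.mp hy
  refine ⟨i, y i, hi, funext fun j => ?_⟩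
  obtain rfl | hij := eq_or_ne j i
  · rw [Pi.single_eq_same]
  · rw [Pi.single_eq_of_ne hij]
    by_contra hj
    exact hij (hd ((eigenvalue_eq hj).trans (eigenvalue_eq hi).symm))

theorem re_neg_of_det_quadratic_one_diagonal_eq_zero {E : Matrix ι ι ℂ} {Λ : ι → ℂ}
    (hE : E.PosSemidef) (hEdiag : ∀ i, E i i ≠ 0) (hΛpos : ∀ i, 0 < Λ i)
    (hΛinj : Function.Injective Λ) {z : ℂ}
    (hz : (z ^ 2 • 1 + z • E + diagonal Λ).det = 0) : z.re < 0 := by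
  refine re_neg_of_det_quadratic_eq_zero .one hE (.diagonal hΛpos) (fun y μ hy hΛy hEy => ?_) hz
  rw [one_mulVec] at hΛy
  obtain ⟨i, c, hc, rfl⟩ := exists_eq_single_of_diagonal_mulVec_eq_smul hΛinj hy hΛy
  have hEic : E i i * c = 0 := by simpa using congrFun hEy i
  exact mul_ne_zero (hEdiag i) hc hEic

theorem modal_rankOne_apply_self_ne_zero {R : Type*} [CommRing R] [IsDomain R] [StarRing R]
    {M X : Matrix ι ι R} (hXM : Xᴴ * M * X = 1) {u : ι → R} {i : ι} (hu : u i ≠ 0) {t : R}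
    (ht : t ≠ 0) :
    (Xᴴ * (t • vecMulVec (M *ᵥ X *ᵥ u) (star (M *ᵥ X *ᵥ u))) * X) i i ≠ 0 := by
  have hXv : Xᴴ *ᵥ M *ᵥ X *ᵥ u = u := by
    rw [mulVec_mulVec, mulVec_mulVec, hXM, one_mulVec]
  have hvX : star (M *ᵥ X *ᵥ u) ᵥ* X = star u := by
    simpa only [star_mulVec, conjTranspose_conjTranspose] using congrArg star hXv
  rw [mul_smul_comm, smul_mul_assoc, mul_vecMulVec, vecMulVec_mul, hXv, hvX]
  exact mul_ne_zero ht (mul_ne_zero hu (star_ne_zero.mpr hu))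

theorem stmt16_general {M D K X : Matrix ι ι ℂ} {Λ : ι → ℂ} (hD : D.PosSemidef)
    (hXM : Xᴴ * M * X = 1) (hXK : Xᴴ * K * X = diagonal Λ)
    (hXD : ∀ i, (Xᴴ * D * X) i i ≠ 0) (hΛpos : ∀ i, 0 < Λ i) (hΛinj : Function.Injective Λ)
    {z : ℂ} (hz : (z ^ 2 • M + z • D + K).det = 0) : z.re < 0 := by
  refine re_neg_of_det_quadratic_one_diagonal_eq_zero (hD.conjTranspose_mul_mul_same X) hXD
    hΛpos hΛinj ?_
  calc (z ^ 2 • 1 + z • (Xᴴ * D * X) + diagonal Λ).det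
      = (Xᴴ * (z ^ 2 • M + z • D + K) * X).det := by
        simp only [← hXM, ← hXK, mul_add, add_mul, mul_smul_comm, smul_mul_assoc]
    _ = 0 := by rw [det_mul, det_mul, hz, mul_zero, zero_mul]

end Fintype

/-- If all eigenvalues of `P₀(λ) = λ²M + K` are simple (distinct positive frequencies
`ω₁, …, ωₙ`), then the rank-one damping `t v v*` with `v = M X u`, all coordinates of `u`
nonzero, moves all eigenvalues into the open left half-plane: every eigenvalue `z` of
`Pₜ(λ) = λ²M + λ t v v* + K` satisfies `Re z < 0` for every `t > 0`. -/
theorem stmt16 {n : ℕ}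
    (M K : Matrix (Fin n) (Fin n) ℂ) (hM : M.PosDef) (hK : K.PosDef)
    (X : Matrix (Fin n) (Fin n) ℂ) (ω : Fin n → ℝ)
    (hXM : Xᴴ * M * X = 1)
    (hXK : Xᴴ * K * X = Matrix.diagonal fun i => ((ω i : ℂ)) ^ 2)
    (hωpos : ∀ i, 0 < ω i) (hωinj : Function.Injective ω)
    (u : Fin n → ℂ) (hu : ∀ i, u i ≠ 0)
    (v : Fin n → ℂ) (hv : v = M.mulVec (X.mulVec u))
    (Pt : ℝ → ℂ → Matrix (Fin n) (Fin n) ℂ)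
    (hPt : ∀ (t : ℝ) (z : ℂ),
      Pt t z = z ^ 2 • M + (z * (t : ℂ)) • Matrix.vecMulVec v (star v) + K) :
    ∀ t : ℝ, 0 < t → ∀ z : ℂ, (Pt t z).det = 0 → z.re < 0 := by
  subst hv
  intro t ht z hz
  have ht' : (0 : ℂ) < t := by exact_mod_cast ht
  refine stmt16_general ((posSemidef_vecMulVec_self_star _).smul ht'.le) hXM hXK
    (fun i => modal_rankOne_apply_self_ne_zero hXM (hu i) ht'.ne')
    (fun i => by exact_mod_cast pow_pos (hωpos i) 2)
    (injective_ofReal_sq (fun i => (hωpos i).le) hωinj) ?_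
  rwa [hPt, ← smul_smul] at hz
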